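/- For every projection game G, every ε with 0 ≤ ε ≤ 1 such that val(G) ≤ 1−ε, and every positive integer k, val(G^{⊗k}) ≤ (1 − ε²/16)^k. -/

import Mathlib

open Finset

/-- A projection game: finite nonempty question sets `Q1` (Alice) and `Q2` (Bob),
a finite nonempty alphabet `A`, and a probability mass function `μ` on triples
`(u, v, π)` where `π : A → Option A` encodes a projection constraint
(the answer pair `(α, β)` satisfies `π` iff `π β = some α`). -/
structure ProjGame where
  Q1 : Type
  Q2 : Type
  A : Type
  [fQ1 : Fintype Q1]
  [fQ2 : Fintype Q2]
  [fA : Fintype A]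
  [neQ1 : Nonempty Q1]
  [neQ2 : Nonempty Q2]
  [neA : Nonempty A]
  [dQ1 : DecidableEq Q1]
  [dQ2 : DecidableEq Q2]
  [dA : DecidableEq A]
  μ : Q1 × Q2 × (A → Option A) → ℝ
  μ_nonneg : ∀ x, 0 ≤ μ x
  μ_sum : ∑ x, μ x = 1

attribute [instance] ProjGame.fQ1 ProjGame.fQ2 ProjGame.fA
  ProjGame.neQ1 ProjGame.neQ2 ProjGame.neA ProjGame.dQ1 ProjGame.dQ2 ProjGame.dA

namespace ProjGame

variable (G : ProjGame)

/-- The `U`-marginal (Alice-side marginal) of `μ`. -/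
noncomputable def wU (u : G.Q1) : ℝ := ∑ v, ∑ π, G.μ (u, v, π)

/-- The `V`-marginal (Bob-side marginal) of `μ`. -/
noncomputable def wV (v : G.Q2) : ℝ := ∑ u, ∑ π, G.μ (u, v, π)

/-- The game operator: `(Gf)(u,α) = E_{(v,π)|u} [∑_{β : π β = some α} f (v,β)]`. -/
noncomputable def op (f : G.Q2 × G.A → ℝ) : G.Q1 × G.A → ℝ :=
  fun p =>
    (∑ v, ∑ π, G.μ (p.1, v, π) * ∑ β, if π β = some p.2 then f (v, β) else 0) / G.wU p.1

/-- Squared norm on functions on `U × Σ`: `‖g‖² = E_u [∑_α g(u,α)²]`. -/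
noncomputable def normUsq (g : G.Q1 × G.A → ℝ) : ℝ := ∑ u, G.wU u * ∑ α, (g (u, α)) ^ 2

/-- Squared norm on functions on `V × Σ`: `‖f‖² = E_v [∑_β f(v,β)²]`. -/
noncomputable def normVsq (f : G.Q2 × G.A → ℝ) : ℝ := ∑ v, G.wV v * ∑ β, (f (v, β)) ^ 2

/-- Inner product `⟨g, g'⟩ = E_u [∑_α g(u,α) g'(u,α)]`. -/
noncomputable def inn (g g' : G.Q1 × G.A → ℝ) : ℝ :=
  ∑ u, G.wU u * ∑ α, g (u, α) * g' (u, α)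

/-- An assignment for Bob. -/
def IsBob (f : G.Q2 × G.A → ℝ) : Prop := (∀ p, 0 ≤ f p) ∧ ∀ v, ∑ β, f (v, β) = 1

/-- An assignment for Alice. -/
def IsAlice (g : G.Q1 × G.A → ℝ) : Prop := (∀ p, 0 ≤ g p) ∧ ∀ u, ∑ α, g (u, α) = 1

/-- The value of the game: `val(G) = max ⟨g, Gf⟩` over assignments. -/
noncomputable def val : ℝ :=
  sSup { x | ∃ f g, G.IsBob f ∧ G.IsAlice g ∧ x = G.inn g (G.op f) }

/-- The collision value `‖G‖ = max_f ‖Gf‖` over assignments `f` for Bob. -/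
noncomputable def collVal : ℝ :=
  sSup { x | ∃ f, G.IsBob f ∧ x = Real.sqrt (G.normUsq (G.op f)) }

/-- Product of projection constraints. -/
def tensorC {A A' : Type} (π : A → Option A) (π' : A' → Option A') :
    A × A' → Option (A × A') :=
  fun b => (π b.1).bind fun a => (π' b.2).map fun a' => (a, a')

/-- The product (parallel repetition) of two projection games. -/
noncomputable def tensor (G H : ProjGame) : ProjGame where
  Q1 := G.Q1 × H.Q1
  Q2 := G.Q2 × H.Q2
  A := G.A × H.A
  μ := fun x =>
    ∑ y : (G.Q1 × G.Q2 × (G.A → Option G.A)) × (H.Q1 × H.Q2 × (H.A → Option H.A)),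
      if ((y.1.1, y.2.1), (y.1.2.1, y.2.2.1), tensorC y.1.2.2 y.2.2.2) = x
      then G.μ y.1 * H.μ y.2 else 0
  μ_nonneg := by
    intro x
    refine Finset.sum_nonneg fun y _ => ?_
    split
    · exact mul_nonneg (G.μ_nonneg _) (H.μ_nonneg _)
    · exact le_refl 0
  μ_sum := by
    rw [Finset.sum_comm]
    simp only [Finset.sum_ite_eq, Finset.mem_univ, if_true]
    rw [Fintype.sum_prod_type]
    calc (∑ y1, ∑ y2, G.μ y1 * H.μ y2)
        = (∑ y1, G.μ y1) * (∑ y2, H.μ y2) := by rw [Finset.sum_mul_sum]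
      _ = 1 := by rw [G.μ_sum, H.μ_sum, mul_one]

/-- `G.iterTensor k` is the `(k+1)`-fold parallel repetition `G^{⊗(k+1)}`. -/
noncomputable def iterTensor (G : ProjGame) : ℕ → ProjGame
  | 0 => G
  | n + 1 => G.tensor (G.iterTensor n)

/-- `val₊(G)`: supremum of values of vector assignments. -/
noncomputable def valPlus (G : ProjGame) : ℝ :=
  sSup { x | ∃ n : ℕ, 0 < n ∧ ∃ f : G.Q2 × G.A → Fin n → ℝ,
    (∀ p i, 0 ≤ f p i) ∧
    (∀ v, Real.sqrt (∑ i, (∑ β, f (v, β) i) ^ 2) ≤ 1) ∧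
    x = Real.sqrt (∑ u, G.wU u * ∑ α, ∑ i, (G.op (fun q => f q i) (u, α)) ^ 2) }

/-- `‖Th‖² = E_v [(∑_β h(v,β))²]`. -/
noncomputable def Tnormsq (G : ProjGame) (h : G.Q2 × G.A → ℝ) : ℝ :=
  ∑ v, G.wV v * (∑ β, h (v, β)) ^ 2

/-- `λ₊(G)`: supremum of `‖Gh‖/‖Th‖` over nonnegative `h` with `‖Th‖ > 0`. -/
noncomputable def lambdaPlus (G : ProjGame) : ℝ :=
  sSup { x | ∃ h : G.Q2 × G.A → ℝ, (∀ p, 0 ≤ h p) ∧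
    0 < Real.sqrt (G.Tnormsq h) ∧
    x = Real.sqrt (G.normUsq (G.op h)) / Real.sqrt (G.Tnormsq h) }

/-- The symmetrized distribution on `V × V` (with the constraints marginalized out). -/
noncomputable def msym (G : ProjGame) (v v' : G.Q2) : ℝ :=
  ∑ u, ((∑ π, G.μ (u, v, π)) * (∑ π', G.μ (u, v', π'))) / G.wU u

/-- `G` is `γ`-expanding: the Markov operator of the symmetrized constraint graph has
spectral gap at least `γ`, i.e. `|⟨x, Ax⟩| ≤ (1-γ) E_v[x(v)²]` for mean-zero `x`. -/
def IsExpanding (G : ProjGame) (γ : ℝ) : Prop :=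
  ∀ x : G.Q2 → ℝ, (∑ v, G.wV v * x v) = 0 →
    |∑ v, ∑ v', G.msym v v' * x v * x v'| ≤ (1 - γ) * ∑ v, G.wV v * (x v) ^ 2

/-- The symmetrized distribution on `(v, v', π, π')`. -/
noncomputable def msymFull (G : ProjGame) (v v' : G.Q2) (π π' : G.A → Option G.A) : ℝ :=
  ∑ u, (G.μ (u, v, π) * G.μ (u, v', π')) / G.wU u

/-- The value of the assignment `x` in the symmetrized game `G_sym`. -/
noncomputable def symValAssign (G : ProjGame) (x : G.Q2 → G.A) : ℝ :=
  ∑ v, ∑ v', ∑ π, ∑ π', G.msymFull v v' π π' *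
    (if ∃ α, π (x v) = some α ∧ π' (x v') = some α then 1 else 0)

/-- The value of the symmetrized game `G_sym`. -/
noncomputable def symVal (G : ProjGame) : ℝ :=
  sSup { r | ∃ x : G.Q2 → G.A, r = G.symValAssign x }

end ProjGame

/-!
Write `‖G‖` for `collVal` and `val₊` for `valPlus`. For an assignment `f` of Bob, `‖G f‖ ^ 2` is
the value of `f` in the symmetrized game, where two independent edges at the same question of Alice
must project to the same answer; it is at most `val G`, since the best answer of Alice to `f` does
at least as well as `G f`.

A nonnegative vector assignment is rounded to an assignment by correlated sampling, derandomized one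
sweep cut at a time; if the vector assignment has value `c`, the result has value at least
`1 - √(8 * (1 - c))`. In the symmetrized game this gives `val₊ G ^ 2 ≤ 1 - (1 - val G) ^ 2 / 8`.

In `G ⊗ H`, applying the operator of `H` first turns an assignment of Bob into a vector assignment
for `G` of norm at most `‖H‖`, so `‖G ⊗ H‖ ≤ val₊ G * ‖H‖`. Iterating,
`val (G^{⊗k}) ≤ ‖G^{⊗k}‖ ≤ val₊ G ^ k`.
-/

section LayerCake

open MeasureTheory intervalIntegral

lemma intervalIntegrable_ite_lt (a x b c : ℝ) :
    IntervalIntegrable (fun θ ↦ if θ < x then a else 0) volume b c := by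
  have h_ind : (fun θ ↦ if θ < x then a else 0) = (Set.Iio x).indicator fun _ ↦ a := rfl
  rw [h_ind, intervalIntegrable_iff]
  exact (integrableOn_const (by simp)).indicator measurableSet_Iio

lemma integral_ite_lt (a : ℝ) {x M : ℝ} (hx : x ∈ Set.Icc 0 M) :
    ∫ θ in 0..M, (if θ < x then a else 0) = a * x := by
  have hIoo : Set.Ioc 0 M ∩ Set.Iio x = Set.Ioo 0 x :=
    Set.ext fun θ ↦ ⟨fun h ↦ ⟨h.1.1, h.2⟩, fun h ↦ ⟨⟨h.1, h.2.le.trans hx.2⟩, h.2⟩⟩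
  calc ∫ θ in 0..M, (if θ < x then a else 0)
      = ∫ θ in Set.Ioc 0 M, (Set.Iio x).indicator (fun _ ↦ a) θ := integral_of_le (hx.1.trans hx.2)
    _ = a * x := by
      rw [setIntegral_indicator measurableSet_Iio, hIoo, setIntegral_const]
      simp [hx.1, mul_comm]

variable {ι κ : Type*} (s : Finset ι) (t : Finset κ) {a x : ι → ℝ} {c y : κ → ℝ} {M : ℝ}

lemma intervalIntegrable_sum_superlevel (a x : ι → ℝ) (b c : ℝ) :
    IntervalIntegrable (fun θ ↦ ∑ i ∈ s with θ < x i, a i) volume b c := by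
  simp only [sum_filter, ← sum_fn]
  exact .sum _ fun i _ ↦ intervalIntegrable_ite_lt (a i) (x i) b c

lemma integral_sum_superlevel (hx : ∀ i ∈ s, x i ∈ Set.Icc 0 M) :
    ∫ θ in 0..M, ∑ i ∈ s with θ < x i, a i = ∑ i ∈ s, a i * x i := by
  simp only [sum_filter]
  rw [integral_finsetSum fun i _ ↦ intervalIntegrable_ite_lt (a i) (x i) 0 M]
  exact sum_congr rfl fun i hi ↦ integral_ite_lt (a i) (hx i hi)

lemma sum_mul_lt_sum_mul_of_superlevel (hM : 0 < M)
    (hx : ∀ i ∈ s, x i ∈ Set.Icc 0 M) (hy : ∀ j ∈ t, y j ∈ Set.Icc 0 M)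
    (h : ∀ θ ∈ Set.Ioo 0 M, ∑ j ∈ t with θ < y j, c j < ∑ i ∈ s with θ < x i, a i) :
    ∑ j ∈ t, c j * y j < ∑ i ∈ s, a i * x i := by
  have ha := intervalIntegrable_sum_superlevel s a x 0 M
  have hc := intervalIntegrable_sum_superlevel t c y 0 M
  rw [← sub_pos, ← integral_sum_superlevel s hx, ← integral_sum_superlevel t hy,
    ← integral_sub ha hc]
  exact intervalIntegral_pos_of_pos_on (ha.sub hc) (fun θ hθ ↦ sub_pos.2 (h θ hθ)) hM

end LayerCake

section Normalize

variable {A : Type*} [Fintype A]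

/-- The probability vector proportional to a nonnegative vector `x`; it is `0` when the entries
of `x` sum to `0`. -/
noncomputable def l1Normalize (x : A → ℝ) : A → ℝ := (∑ a, x a)⁻¹ • x

lemma l1Normalize_nonneg {x : A → ℝ} (hx : 0 ≤ x) : 0 ≤ l1Normalize x :=
  smul_nonneg (inv_nonneg.2 (sum_nonneg fun a _ ↦ hx a)) hx

lemma sum_l1Normalize (x : A → ℝ) : ∑ a, l1Normalize x a = (∑ a, x a)⁻¹ * ∑ a, x a := by
  simp [l1Normalize, mul_sum]

lemma sum_l1Normalize_le_one (x : A → ℝ) : ∑ a, l1Normalize x a ≤ 1 :=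
  (sum_l1Normalize x).trans_le inv_mul_le_one

lemma l1Normalize_mem_stdSimplex {x : A → ℝ} (hx : 0 ≤ x) (hsum : 0 < ∑ a, x a) :
    l1Normalize x ∈ stdSimplex ℝ A :=
  ⟨l1Normalize_nonneg hx, (sum_l1Normalize x).trans (inv_mul_cancel₀ hsum.ne')⟩

lemma sum_smul_l1Normalize {x : A → ℝ} (hx : 0 ≤ x) : (∑ a, x a) • l1Normalize x = x := by
  rcases eq_or_ne (∑ a, x a) 0 with h | h
  · rw [(Fintype.sum_eq_zero_iff_of_nonneg hx).1 h]
    simp [l1Normalize]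
  · rw [l1Normalize, smul_inv_smul₀ h]

end Normalize

lemma sq_sq_sub_mul_sq_le {q : ℝ} (hq0 : 0 ≤ q) (hq1 : q ≤ 1) (x y : ℝ) :
    (x ^ 2 - q * y ^ 2) ^ 2 ≤ 2 * (x ^ 2 + y ^ 2) * (x ^ 2 + y ^ 2 - 2 * (x * y * q)) := by
  have : 0 ≤ 1 - q := sub_nonneg.2 hq1
  have h_gap : 2 * (x ^ 2 + y ^ 2) * (x ^ 2 + y ^ 2 - 2 * (x * y * q)) - (x ^ 2 - q * y ^ 2) ^ 2 =
      (1 - q) * (x ^ 4 + 4 * x ^ 2 * y ^ 2 + 2 * y ^ 4) + q * (x - y) ^ 4 +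
        q * (1 - q) * y ^ 4 := by ring
  rw [← sub_nonneg, h_gap]
  positivity

lemma sq_max_sub_mul_min_le {q : ℝ} (hq0 : 0 ≤ q) (hq1 : q ≤ 1) (x y : ℝ) :
    (max (x ^ 2) (y ^ 2) - q * min (x ^ 2) (y ^ 2)) ^ 2 ≤
      2 * (x ^ 2 + y ^ 2) * (x ^ 2 + y ^ 2 - 2 * (x * y * q)) := by
  rcases le_total (y ^ 2) (x ^ 2) with hle | hle
  · rw [max_eq_left hle, min_eq_right hle]
    exact sq_sq_sub_mul_sq_le hq0 hq1 x y
  · rw [max_eq_right hle, min_eq_left hle, add_comm (x ^ 2), mul_comm x]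
    exact sq_sq_sub_mul_sq_le hq0 hq1 y x

/-- A finite binary constraint satisfaction problem whose constraints are drawn from a probability
distribution. A constraint `p` joins the variables `src p` and `tgt p`, and answering them by `α`
and `β` earns `payoff p α β`. -/
structure BinaryCSP (V A P : Type*) [Fintype P] where
  src : P → V
  tgt : P → V
  weight : P → ℝ
  payoff : P → Matrix A A ℝ
  weight_nonneg : ∀ p, 0 ≤ weight p
  weight_sum : ∑ p, weight p = 1
  payoff_nonneg : ∀ p α β, 0 ≤ payoff p α β
  payoff_le_one : ∀ p α β, payoff p α β ≤ 1

namespace BinaryCSP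

open Matrix

variable {V A P I : Type*} [Fintype P]

section Constraints

variable [DecidableEq V] (C : BinaryCSP V A P)

/-- The constraints both of whose variables lie in `R`. -/
def constraintsWithin (R : Finset V) : Finset P := {p | C.src p ∈ R ∧ C.tgt p ∈ R}

variable {C}

lemma mem_constraintsWithin {R : Finset V} {p : P} :
    p ∈ C.constraintsWithin R ↔ C.src p ∈ R ∧ C.tgt p ∈ R := by
  simp [constraintsWithin]

lemma constraintsWithin_sdiff (R S : Finset V) :
    C.constraintsWithin (R \ S) = {p ∈ C.constraintsWithin R | ¬(C.src p ∈ S ∨ C.tgt p ∈ S)} := by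
  ext p
  simp only [mem_constraintsWithin, mem_filter, mem_sdiff]
  tauto

lemma constraintsWithin_subset_filter {S R : Finset V} (hSR : S ⊆ R) :
    C.constraintsWithin S ⊆ {p ∈ C.constraintsWithin R | C.src p ∈ S ∨ C.tgt p ∈ S} := fun p hp ↦ by
  obtain ⟨hs, ht⟩ := mem_constraintsWithin.1 hp
  exact mem_filter.2 ⟨mem_constraintsWithin.2 ⟨hSR hs, hSR ht⟩, Or.inl hs⟩

-- Lovász-extension form of a sweep cut: averaged over thresholds, the indicator that a superlevel
-- set of `y` contains both (resp. at least one) of two variables becomes a minimum (resp. maximum).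
lemma sum_mul_min_lt_sum_mul_max {R : Finset V} {y : V → ℝ} (hy : 0 ≤ y) (hpos : ∃ v ∈ R, 0 < y v)
    {a c : P → ℝ}
    (hcut : ∀ S ⊆ R, S.Nonempty → (∀ v ∈ S, 0 < y v) →
      ∑ p ∈ C.constraintsWithin S, c p <
        ∑ p ∈ C.constraintsWithin R with C.src p ∈ S ∨ C.tgt p ∈ S, a p) :
    ∑ p ∈ C.constraintsWithin R, c p * min (y (C.src p)) (y (C.tgt p)) <
      ∑ p ∈ C.constraintsWithin R, a p * max (y (C.src p)) (y (C.tgt p)) := by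
  obtain ⟨v, hvR, hv⟩ := hpos
  obtain ⟨m, hmR, hm⟩ := R.exists_max_image y ⟨v, hvR⟩
  refine sum_mul_lt_sum_mul_of_superlevel _ _ (hv.trans_le (hm v hvR)) (fun p hp ↦ ?_)
    (fun p hp ↦ ?_) fun θ hθ ↦ ?_
  · have hp := mem_constraintsWithin.1 hp
    exact ⟨(hy _).trans (le_max_left _ _), max_le (hm _ hp.1) (hm _ hp.2)⟩
  · exact ⟨le_min (hy _) (hy _), (min_le_left _ _).trans (hm _ (mem_constraintsWithin.1 hp).1)⟩
  · convert hcut {v ∈ R | θ < y v} (filter_subset _ _) ⟨m, mem_filter.2 ⟨hmR, hθ.2⟩⟩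
      (fun v hv ↦ hθ.1.trans (mem_filter.1 hv).2) using 2 <;> ext p
    · simp only [mem_constraintsWithin, mem_filter, lt_min_iff]
      tauto
    · simp only [mem_constraintsWithin, mem_filter, lt_max_iff]
      tauto

end Constraints

variable [Fintype A] [Fintype I]

section Score

variable (C : BinaryCSP V A P)

/-- The expected payoff of the constraint `p` when its two variables are answered independently
according to `x` and `y`. -/
def score (p : P) (x y : A → ℝ) : ℝ := x ⬝ᵥ C.payoff p *ᵥ y

/-- The expected payoff of a randomized assignment `b`; it extends bilinearly to families `b` of
arbitrary vectors. -/
def value (b : V → A → ℝ) : ℝ := ∑ p, C.weight p * C.score p (b (C.src p)) (b (C.tgt p))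

variable {C} {p : P} {x y : A → ℝ}

lemma score_nonneg (hx : 0 ≤ x) (hy : 0 ≤ y) : 0 ≤ C.score p x y :=
  dotProduct_nonneg_of_nonneg hx fun α ↦ dotProduct_nonneg_of_nonneg (C.payoff_nonneg p α) hy

lemma score_le_sum_mul_sum (hx : 0 ≤ x) (hy : 0 ≤ y) :
    C.score p x y ≤ (∑ α, x α) * ∑ β, y β := by
  rw [sum_mul]
  refine sum_le_sum fun α _ ↦ mul_le_mul_of_nonneg_left (sum_le_sum fun β _ ↦ ?_) (hx α)
  exact mul_le_of_le_one_left (hy β) (C.payoff_le_one p α β)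

lemma score_smul_smul (r s : ℝ) : C.score p (r • x) (s • y) = r * s * C.score p x y := by
  simp only [score, mulVec_smul, smul_dotProduct, dotProduct_smul, smul_eq_mul]
  ring

lemma score_l1Normalize_le_one (hx : 0 ≤ x) (hy : 0 ≤ y) :
    C.score p (l1Normalize x) (l1Normalize y) ≤ 1 :=
  (score_le_sum_mul_sum (l1Normalize_nonneg hx) (l1Normalize_nonneg hy)).trans <|
    mul_le_one₀ (sum_l1Normalize_le_one x) (sum_nonneg fun a _ ↦ l1Normalize_nonneg hy a)
      (sum_l1Normalize_le_one y)

lemma score_eq_mul_score_l1Normalize (hx : 0 ≤ x) (hy : 0 ≤ y) :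
    C.score p x y = (∑ a, x a) * (∑ a, y a) * C.score p (l1Normalize x) (l1Normalize y) := by
  rw [← score_smul_smul, sum_smul_l1Normalize hx, sum_smul_l1Normalize hy]

lemma value_nonneg {b : V → A → ℝ} (hb : ∀ v, 0 ≤ b v) : 0 ≤ C.value b :=
  sum_nonneg fun p _ ↦ mul_nonneg (C.weight_nonneg p) (score_nonneg (hb _) (hb _))

lemma one_sub_value (b : V → A → ℝ) :
    1 - C.value b = ∑ p, C.weight p * (1 - C.score p (b (C.src p)) (b (C.tgt p))) := by
  simp only [value, mul_sub, mul_one, sum_sub_distrib, C.weight_sum]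

lemma value_le_one {b : V → A → ℝ} (hb : ∀ v, b v ∈ stdSimplex ℝ A) : C.value b ≤ 1 := by
  rw [← sub_nonneg, one_sub_value]
  refine sum_nonneg fun p _ ↦ mul_nonneg (C.weight_nonneg p) (sub_nonneg.2 ?_)
  refine (score_le_sum_mul_sum (hb _).1 (hb _).1).trans_eq ?_
  rw [(hb _).2, (hb _).2, mul_one]

end Score

section ThresholdLoss

variable (C : BinaryCSP V A P) (h : I → V → A → ℝ)

/-- Bounds the loss on the constraint `p` of the correlated-sampling rounding of `h`: each vertex
`v` accepts a coordinate `i` with probability `(∑ a, h i v a) ^ 2`, through a threshold shared by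
all vertices, and answers according to the first one it accepts. -/
noncomputable def thresholdLoss (p : P) : ℝ :=
  ∑ i, (max ((∑ a, h i (C.src p) a) ^ 2) ((∑ a, h i (C.tgt p) a) ^ 2) -
    C.score p (l1Normalize (h i (C.src p))) (l1Normalize (h i (C.tgt p))) *
      min ((∑ a, h i (C.src p) a) ^ 2) ((∑ a, h i (C.tgt p) a) ^ 2))

variable {C h}

lemma thresholdLoss_nonneg (hh : ∀ i v, 0 ≤ h i v) (p : P) : 0 ≤ C.thresholdLoss h p :=
  sum_nonneg fun i _ ↦ sub_nonneg.2 <|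
    (mul_le_of_le_one_left (by positivity)
      (score_l1Normalize_le_one (hh i (C.src p)) (hh i (C.tgt p)))).trans min_le_max

lemma thresholdLoss_sq_le (hh : ∀ i v, 0 ≤ h i v) (hX : ∀ v, ∑ i, (∑ a, h i v a) ^ 2 ≤ 1) (p : P) :
    C.thresholdLoss h p ^ 2 ≤
      8 * (1 - ∑ i, C.score p (h i (C.src p)) (h i (C.tgt p))) := by
  set x : I → ℝ := fun i ↦ ∑ a, h i (C.src p) a
  set y : I → ℝ := fun i ↦ ∑ a, h i (C.tgt p) a
  have hx : ∑ i, x i ^ 2 ≤ 1 := hX _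
  have hy : ∑ i, y i ^ 2 ≤ 1 := hX _
  have h_term (i : I) := sq_max_sub_mul_min_le
    (score_nonneg (C := C) (p := p) (l1Normalize_nonneg (hh i (C.src p)))
      (l1Normalize_nonneg (hh i (C.tgt p))))
    (score_l1Normalize_le_one (hh i (C.src p)) (hh i (C.tgt p))) (x i) (y i)
  have h_score (i : I) := score_eq_mul_score_l1Normalize (C := C) (p := p)
    (hh i (C.src p)) (hh i (C.tgt p))
  have h_score_le (i : I) :
      0 ≤ x i ^ 2 + y i ^ 2 - 2 * C.score p (h i (C.src p)) (h i (C.tgt p)) := by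
    linarith [sq_nonneg (x i - y i), score_le_sum_mul_sum (C := C) (p := p)
      (hh i (C.src p)) (hh i (C.tgt p))]
  calc C.thresholdLoss h p ^ 2
      ≤ (∑ i, 2 * (x i ^ 2 + y i ^ 2)) *
          ∑ i, (x i ^ 2 + y i ^ 2 - 2 * C.score p (h i (C.src p)) (h i (C.tgt p))) :=
        sum_sq_le_sum_mul_sum_of_sq_le_mul _ (fun i _ ↦ by positivity) (fun i _ ↦ h_score_le i)
          fun i _ ↦ by rw [h_score]; exact h_term i
    _ ≤ 4 * (2 - 2 * ∑ i, C.score p (h i (C.src p)) (h i (C.tgt p))) := by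
        have h_nonneg := sum_nonneg fun i (_ : i ∈ univ) ↦ h_score_le i
        refine mul_le_mul ?_ ?_ h_nonneg (by norm_num) <;>
          simp only [sum_sub_distrib, sum_add_distrib, ← mul_sum] <;> linarith
    _ = 8 * (1 - ∑ i, C.score p (h i (C.src p)) (h i (C.tgt p))) := by ring

lemma sum_weight_mul_thresholdLoss_sq_le (hh : ∀ i v, 0 ≤ h i v)
    (hX : ∀ v, ∑ i, (∑ a, h i v a) ^ 2 ≤ 1) :
    (∑ p, C.weight p * C.thresholdLoss h p) ^ 2 ≤ 8 * (1 - ∑ i, C.value (h i)) := by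
  have hw := C.weight_nonneg
  calc (∑ p, C.weight p * C.thresholdLoss h p) ^ 2
      ≤ (∑ p, C.weight p) * ∑ p, C.weight p * C.thresholdLoss h p ^ 2 :=
        sum_sq_le_sum_mul_sum_of_sq_le_mul _ (fun p _ ↦ hw p)
          (fun p _ ↦ mul_nonneg (hw p) (sq_nonneg _)) fun p _ ↦ le_of_eq (by ring)
    _ ≤ 1 * ∑ p, C.weight p * (8 * (1 - ∑ i, C.score p (h i (C.src p)) (h i (C.tgt p)))) := by
        rw [C.weight_sum]
        gcongr with p
        · exact hw p
        · exact thresholdLoss_sq_le hh hX p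
    _ = 8 * (1 - ∑ i, C.value (h i)) := by
        simp only [value, one_mul, mul_left_comm _ (8 : ℝ), ← mul_sum]
        simp only [mul_sub, mul_one, sum_sub_distrib, C.weight_sum, mul_sum]
        rw [sum_comm]

end ThresholdLoss

section Rounding

variable {C : BinaryCSP V A P} {h : I → V → A → ℝ}

-- Otherwise every sweep cut of every coordinate violates the inequality strictly; integrating over
-- the threshold and summing over `i` contradicts the definition of `thresholdLoss`.
lemma exists_cut [DecidableEq V] (hh : ∀ i v, 0 ≤ h i v)
    (hX : ∀ v, ∑ i, (∑ a, h i v a) ^ 2 = 1) {R : Finset V} (hR : R.Nonempty) :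
    ∃ i, ∃ S ⊆ R, S.Nonempty ∧ (∀ v ∈ S, 0 < ∑ a, h i v a) ∧
      ∑ p ∈ C.constraintsWithin R with C.src p ∈ S ∨ C.tgt p ∈ S,
          C.weight p * (1 - C.thresholdLoss h p) ≤
        ∑ p ∈ C.constraintsWithin S, C.weight p *
          C.score p (l1Normalize (h i (C.src p))) (l1Normalize (h i (C.tgt p))) := by
  by_contra! hcut
  set y : I → V → ℝ := fun i v ↦ (∑ a, h i v a) ^ 2 with hy_def
  set Q : I → P → ℝ := fun i p ↦
    C.score p (l1Normalize (h i (C.src p))) (l1Normalize (h i (C.tgt p)))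
  have hy (i) : 0 ≤ y i := fun v ↦ sq_nonneg _
  have hpos_of_sq_pos {i v} (hv : 0 < y i v) : 0 < ∑ a, h i v a :=
    (sum_nonneg fun a _ ↦ hh i v a).lt_of_ne' fun h0 ↦ hv.ne' (by simp [hy_def, h0])
  have h_lt (i) (hi : ∃ v ∈ R, 0 < y i v) := sum_mul_min_lt_sum_mul_max (hy i) hi
    fun S hSR hS hSy ↦ hcut i S hSR hS fun v hv ↦ hpos_of_sq_pos (hSy v hv)
  have h_le (i) : ∑ p ∈ C.constraintsWithin R,
        C.weight p * Q i p * min (y i (C.src p)) (y i (C.tgt p)) ≤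
      ∑ p ∈ C.constraintsWithin R,
        C.weight p * (1 - C.thresholdLoss h p) * max (y i (C.src p)) (y i (C.tgt p)) := by
    by_cases hi : ∃ v ∈ R, 0 < y i v
    · exact (h_lt i hi).le
    · have hzero : ∀ v ∈ R, y i v = 0 := fun v hv ↦
        (not_lt.1 fun h0 ↦ hi ⟨v, hv, h0⟩).antisymm (hy i v)
      refine (sum_congr rfl fun p hp ↦ ?_).le
      simp [hzero _ (mem_constraintsWithin.1 hp).1, hzero _ (mem_constraintsWithin.1 hp).2]
  obtain ⟨v, hv⟩ := hR
  obtain ⟨i, -, hi⟩ : ∃ i ∈ univ, 0 < y i v := exists_lt_of_sum_lt (by simp [hy_def, hX v])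
  have h_total := sum_lt_sum (fun i _ ↦ h_le i) ⟨i, mem_univ i, h_lt i ⟨v, hv, hi⟩⟩
  rw [sum_comm, sum_comm (s := univ)] at h_total
  refine h_total.not_ge (sum_le_sum fun p _ ↦ ?_)
  have hmax : 1 ≤ ∑ i, max (y i (C.src p)) (y i (C.tgt p)) :=
    (hX (C.src p)).symm.trans_le (sum_le_sum fun i _ ↦ le_max_left _ _)
  have hloss : C.thresholdLoss h p = ∑ i, max (y i (C.src p)) (y i (C.tgt p)) -
      ∑ i, Q i p * min (y i (C.src p)) (y i (C.tgt p)) := sum_sub_distrib ..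
  simp only [mul_assoc, ← mul_sum]
  refine mul_le_mul_of_nonneg_left ?_ (C.weight_nonneg p)
  nlinarith [thresholdLoss_nonneg (C := C) hh p]

lemma exists_rounding_within [DecidableEq V] [Nonempty A] (hh : ∀ i v, 0 ≤ h i v)
    (hX : ∀ v, ∑ i, (∑ a, h i v a) ^ 2 = 1) (R : Finset V) :
    ∃ b : V → A → ℝ, (∀ v, b v ∈ stdSimplex ℝ A) ∧
      ∑ p ∈ C.constraintsWithin R, C.weight p * (1 - C.score p (b (C.src p)) (b (C.tgt p))) ≤
        ∑ p ∈ C.constraintsWithin R, C.weight p * C.thresholdLoss h p := by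
  classical
  induction R using Finset.strongInduction with | H R ih
  rcases R.eq_empty_or_nonempty with rfl | hR
  · exact ⟨fun _ ↦ Pi.single (Classical.arbitrary A) 1, fun _ ↦ single_mem_stdSimplex ℝ _,
      by simp [constraintsWithin]⟩
  obtain ⟨i, S, hSR, hS, hSpos, hcut⟩ := exists_cut (C := C) hh hX hR
  obtain ⟨b', hb', hloss⟩ := ih (R \ S) (sdiff_ssubset hSR hS)
  let b := S.piecewise (fun v ↦ l1Normalize (h i v)) b'
  have hb (v) : b v ∈ stdSimplex ℝ A := by
    by_cases hv : v ∈ S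
    · simpa [b, hv] using l1Normalize_mem_stdSimplex (hh i v) (hSpos v hv)
    · simpa [b, hv] using hb' v
  refine ⟨b, hb, ?_⟩
  rw [← sum_filter_add_sum_filter_not _ fun p ↦ C.src p ∈ S ∨ C.tgt p ∈ S,
    ← sum_filter_add_sum_filter_not (C.constraintsWithin R) fun p ↦ C.src p ∈ S ∨ C.tgt p ∈ S,
    ← constraintsWithin_sdiff]
  refine add_le_add ?_ (hloss.trans_eq' (sum_congr rfl fun p hp ↦ ?_))
  · have h_within : ∑ p ∈ C.constraintsWithin S, C.weight p *
          C.score p (l1Normalize (h i (C.src p))) (l1Normalize (h i (C.tgt p))) ≤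
        ∑ p ∈ C.constraintsWithin R with C.src p ∈ S ∨ C.tgt p ∈ S,
          C.weight p * C.score p (b (C.src p)) (b (C.tgt p)) := by
      refine (sum_congr rfl fun p hp ↦ ?_).trans_le <|
        sum_le_sum_of_subset_of_nonneg (constraintsWithin_subset_filter hSR) fun p _ _ ↦
          mul_nonneg (C.weight_nonneg p) (score_nonneg (hb _).1 (hb _).1)
      obtain ⟨hs, ht⟩ := mem_constraintsWithin.1 hp
      simp only [b, piecewise_eq_of_mem _ _ _ hs, piecewise_eq_of_mem _ _ _ ht]
    simp only [mul_sub, mul_one, sum_sub_distrib] at hcut ⊢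
    linarith
  · obtain ⟨hs, ht⟩ := mem_constraintsWithin.1 hp
    simp only [b, piecewise_eq_of_notMem _ _ _ (mem_sdiff.1 hs).2,
      piecewise_eq_of_notMem _ _ _ (mem_sdiff.1 ht).2]

lemma exists_rounding_of_sum_sq_eq_one [Nonempty A] (hh : ∀ i v, 0 ≤ h i v)
    (hX : ∀ v, ∑ i, (∑ a, h i v a) ^ 2 = 1) :
    ∃ b : V → A → ℝ, (∀ v, b v ∈ stdSimplex ℝ A) ∧
      (1 - C.value b) ^ 2 ≤ 8 * (1 - ∑ i, C.value (h i)) := by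
  classical
  let R := univ.image C.src ∪ univ.image C.tgt
  have huniv : C.constraintsWithin R = univ := by simp [R, constraintsWithin]
  obtain ⟨b, hb, hloss⟩ := exists_rounding_within (C := C) hh hX R
  rw [huniv, ← one_sub_value] at hloss
  exact ⟨b, hb, (pow_le_pow_left₀ (sub_nonneg.2 (value_le_one hb)) hloss 2).trans
    (sum_weight_mul_thresholdLoss_sq_le hh fun v ↦ (hX v).le)⟩

theorem exists_rounding [Nonempty A] (hh : ∀ i v, 0 ≤ h i v)
    (hX : ∀ v, ∑ i, (∑ a, h i v a) ^ 2 ≤ 1) :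
    ∃ b : V → A → ℝ, (∀ v, b v ∈ stdSimplex ℝ A) ∧
      (1 - C.value b) ^ 2 ≤ 8 * (1 - ∑ i, C.value (h i)) := by
  classical
  let pad (v : V) : A → ℝ :=
    Pi.single (Classical.arbitrary A) √(1 - ∑ i, (∑ a, h i v a) ^ 2)
  have hpad (v) : 0 ≤ pad v := Pi.single_nonneg.2 (Real.sqrt_nonneg _)
  obtain ⟨b, hb, hle⟩ := exists_rounding_of_sum_sq_eq_one (C := C)
    (h := fun j : Option I ↦ j.elim pad h) (Option.rec hpad hh) fun v ↦ by
      simp [Fintype.sum_option, pad, Real.sq_sqrt (sub_nonneg.2 (hX v))]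
  refine ⟨b, hb, hle.trans ?_⟩
  have := C.value_nonneg hpad
  rw [Fintype.sum_option]
  dsimp only [Option.elim]
  linarith

end Rounding

end BinaryCSP

namespace ProjGame

open Matrix

section Operator

/-- The 0/1 matrix of a projection constraint; it maps a distribution of Bob's answers to the
induced distribution of the answers that Alice may give. -/
def constraintMatrix {A : Type*} [DecidableEq A] (π : A → Option A) : Matrix A A ℝ :=
  of fun α β ↦ if π β = some α then 1 else 0

lemma constraintMatrix_nonneg {A : Type*} [DecidableEq A] (π : A → Option A) (α β : A) :
    0 ≤ constraintMatrix π α β := by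
  rw [constraintMatrix, of_apply]
  positivity

lemma sum_constraintMatrix_le_one {A : Type*} [Fintype A] [DecidableEq A] (π : A → Option A)
    (β : A) : ∑ α, constraintMatrix π α β ≤ 1 := by
  simp only [constraintMatrix, of_apply]
  cases π β <;> simp

/-- A question for Bob together with the constraint on his answer. -/
abbrev Edge (V A : Type*) := V × (A → Option A)

variable {G : ProjGame}

lemma wU_eq_sum_edge (u : G.Q1) : G.wU u = ∑ e : Edge G.Q2 G.A, G.μ (u, e) :=
  (Fintype.sum_prod_type fun e : Edge G.Q2 G.A ↦ G.μ (u, e)).symm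

lemma wU_nonneg (u : G.Q1) : 0 ≤ G.wU u :=
  sum_nonneg fun _ _ ↦ sum_nonneg fun _ _ ↦ G.μ_nonneg _

variable (G) in
lemma sum_wU : ∑ u, G.wU u = 1 := by
  simp only [wU_eq_sum_edge, ← G.μ_sum, Fintype.sum_prod_type (f := G.μ)]

lemma op_apply (f : G.Q2 × G.A → ℝ) (u : G.Q1) (α : G.A) :
    G.op f (u, α) = (∑ e : Edge G.Q2 G.A, G.μ (u, e) *
      (constraintMatrix e.2 *ᵥ fun β ↦ f (e.1, β)) α) / G.wU u := by
  simp [op, constraintMatrix, mulVec, dotProduct, Fintype.sum_prod_type]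

variable (G) in
/-- The game operator `ProjGame.op` as a linear map. -/
noncomputable def opLinearMap : (G.Q2 × G.A → ℝ) →ₗ[ℝ] G.Q1 × G.A → ℝ where
  toFun := G.op
  map_add' f g := by
    ext ⟨u, α⟩
    have h_add (e : Edge G.Q2 G.A) : (constraintMatrix e.2 *ᵥ fun β ↦ f (e.1, β) + g (e.1, β)) α =
        (constraintMatrix e.2 *ᵥ fun β ↦ f (e.1, β)) α +
          (constraintMatrix e.2 *ᵥ fun β ↦ g (e.1, β)) α :=
      congrFun (mulVec_add _ _ _) α
    simp only [op_apply, Pi.add_apply, h_add, mul_add, sum_add_distrib, add_div]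
  map_smul' c f := by
    ext ⟨u, α⟩
    have h_smul (e : Edge G.Q2 G.A) : (constraintMatrix e.2 *ᵥ fun β ↦ c * f (e.1, β)) α =
        c * (constraintMatrix e.2 *ᵥ fun β ↦ f (e.1, β)) α :=
      congrFun (mulVec_smul _ c fun β ↦ f (e.1, β)) α
    simp only [op_apply, RingHom.id_apply, Pi.smul_apply, smul_eq_mul, h_smul, mul_left_comm _ c,
      ← mul_sum, mul_div_assoc]

lemma op_smul (c : ℝ) (f : G.Q2 × G.A → ℝ) : G.op (c • f) = c • G.op f :=
  map_smul G.opLinearMap c f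

lemma op_sum {ι : Type*} (s : Finset ι) (f : ι → G.Q2 × G.A → ℝ) :
    G.op (∑ i ∈ s, f i) = ∑ i ∈ s, G.op (f i) :=
  map_sum G.opLinearMap f s

variable {f : G.Q2 × G.A → ℝ}

lemma op_nonneg (hf : 0 ≤ f) : 0 ≤ G.op f := by
  rintro ⟨u, α⟩
  rw [op_apply]
  exact div_nonneg (sum_nonneg fun e _ ↦ mul_nonneg (G.μ_nonneg _) <|
    dotProduct_nonneg_of_nonneg (constraintMatrix_nonneg e.2 α) fun _ ↦ hf _) (wU_nonneg u)

lemma sum_op_le_one (hf : 0 ≤ f) (hsum : ∀ v, ∑ β, f (v, β) ≤ 1) (u : G.Q1) :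
    ∑ α, G.op f (u, α) ≤ 1 := by
  simp only [op_apply, ← sum_div]
  refine div_le_one_of_le₀ ?_ (wU_nonneg u)
  rw [sum_comm, wU_eq_sum_edge]
  refine sum_le_sum fun e _ ↦ ?_
  rw [← mul_sum]
  refine mul_le_of_le_one_right (G.μ_nonneg _) (le_trans ?_ (hsum e.1))
  simp only [mulVec, dotProduct]
  rw [sum_comm]
  refine sum_le_sum fun β _ ↦ ?_
  rw [← sum_mul]
  exact mul_le_of_le_one_left (hf _) (sum_constraintMatrix_le_one e.2 β)

end Operator

section Norm

variable {G : ProjGame} {f : G.Q2 × G.A → ℝ} {g g' : G.Q1 × G.A → ℝ}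

lemma normUsq_eq_sum_prod : G.normUsq g = ∑ q, G.wU q.1 * g q ^ 2 := by
  simp only [normUsq, mul_sum, Fintype.sum_prod_type]

lemma normUsq_nonneg : 0 ≤ G.normUsq g :=
  sum_nonneg fun u _ ↦ mul_nonneg (wU_nonneg u) (sum_nonneg fun _ _ ↦ sq_nonneg _)

lemma normUsq_smul (c : ℝ) : G.normUsq (c • g) = c ^ 2 * G.normUsq g := by
  simp only [normUsq_eq_sum_prod, Pi.smul_apply, smul_eq_mul, mul_pow, mul_left_comm _ (c ^ 2),
    ← mul_sum]

lemma sum_normUsq {ι : Type*} [Fintype ι] (g : ι → G.Q1 × G.A → ℝ) :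
    ∑ i, G.normUsq (g i) = ∑ u, G.wU u * ∑ α, ∑ i, g i (u, α) ^ 2 := by
  simp only [normUsq]
  rw [sum_comm]
  simp only [← mul_sum]
  exact sum_congr rfl fun u _ ↦ congrArg (G.wU u * ·) sum_comm

lemma normUsq_le_one (hg : 0 ≤ g) (hsum : ∀ u, ∑ α, g (u, α) ≤ 1) : G.normUsq g ≤ 1 := by
  rw [← G.sum_wU]
  refine sum_le_sum fun u _ ↦ mul_le_of_le_one_right (wU_nonneg u) ?_
  exact (sum_sq_le_sq_sum_of_nonneg fun α _ ↦ hg (u, α)).trans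
    (pow_le_one₀ (sum_nonneg fun α _ ↦ hg (u, α)) (hsum u))

lemma inn_sq_le_normUsq_mul_normUsq : G.inn g g' ^ 2 ≤ G.normUsq g * G.normUsq g' := by
  have h_inn : G.inn g g' = ∑ q, G.wU q.1 * (g q * g' q) := by
    simp only [inn, mul_sum, Fintype.sum_prod_type]
  rw [h_inn, normUsq_eq_sum_prod, normUsq_eq_sum_prod]
  refine sum_sq_le_sum_mul_sum_of_sq_le_mul _ (fun q _ ↦ mul_nonneg (wU_nonneg _) (sq_nonneg _))
    (fun q _ ↦ mul_nonneg (wU_nonneg _) (sq_nonneg _)) fun q _ ↦ le_of_eq (by ring)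

lemma inn_le_sqrt_normUsq (hg : G.IsAlice g) : G.inn g g' ≤ √(G.normUsq g') :=
  Real.le_sqrt_of_sq_le <| inn_sq_le_normUsq_mul_normUsq.trans <|
    mul_le_of_le_one_left normUsq_nonneg (normUsq_le_one hg.1 fun u ↦ (hg.2 u).le)

lemma sqrt_normUsq_op_le_one (hf : G.IsBob f) : √(G.normUsq (G.op f)) ≤ 1 :=
  Real.sqrt_le_one.2 <|
    normUsq_le_one (op_nonneg hf.1) (sum_op_le_one hf.1 fun v ↦ (hf.2 v).le)

end Norm

section Value

variable {G : ProjGame} {f : G.Q2 × G.A → ℝ} {g : G.Q1 × G.A → ℝ}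

lemma sqrt_normUsq_op_le_collVal (hf : G.IsBob f) : √(G.normUsq (G.op f)) ≤ G.collVal :=
  le_csSup ⟨1, by rintro _ ⟨f, hf, rfl⟩; exact sqrt_normUsq_op_le_one hf⟩ ⟨f, hf, rfl⟩

lemma collVal_nonneg : 0 ≤ G.collVal :=
  Real.sSup_nonneg <| by rintro _ ⟨f, -, rfl⟩; exact Real.sqrt_nonneg _

lemma normUsq_op_le_collVal_sq (hf : G.IsBob f) : G.normUsq (G.op f) ≤ G.collVal ^ 2 :=
  (Real.sqrt_le_left collVal_nonneg).1 (sqrt_normUsq_op_le_collVal hf)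

variable (G) in
lemma val_le_collVal : G.val ≤ G.collVal := by
  refine Real.sSup_le ?_ collVal_nonneg
  rintro _ ⟨f, g, hf, hg, rfl⟩
  exact (inn_le_sqrt_normUsq hg).trans (sqrt_normUsq_op_le_collVal hf)

lemma inn_op_le_val (hf : G.IsBob f) (hg : G.IsAlice g) : G.inn g (G.op f) ≤ G.val := by
  refine le_csSup ⟨1, ?_⟩ ⟨f, g, hf, hg, rfl⟩
  rintro _ ⟨f, g, hf, hg, rfl⟩
  exact (inn_le_sqrt_normUsq hg).trans (sqrt_normUsq_op_le_one hf)

lemma val_le_one : G.val ≤ 1 := by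
  refine Real.sSup_le ?_ zero_le_one
  rintro _ ⟨f, g, hf, hg, rfl⟩
  exact (inn_le_sqrt_normUsq hg).trans (sqrt_normUsq_op_le_one hf)

lemma exists_isAlice_ge (hg : 0 ≤ g) (hsum : ∀ u, ∑ α, g (u, α) ≤ 1) :
    ∃ g', G.IsAlice g' ∧ g ≤ g' := by
  let rest (u : G.Q1) : G.A → ℝ := Pi.single (Classical.arbitrary _) (1 - ∑ α, g (u, α))
  have h_rest (u) : 0 ≤ rest u := Pi.single_nonneg.2 (sub_nonneg.2 (hsum u))
  refine ⟨fun q ↦ g q + rest q.1 q.2, ⟨fun q ↦ add_nonneg (hg q) (h_rest _ _), fun u ↦ ?_⟩,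
    fun q ↦ le_add_of_nonneg_right (h_rest _ _)⟩
  simp [sum_add_distrib, rest]

lemma normUsq_op_le_val (hf : G.IsBob f) : G.normUsq (G.op f) ≤ G.val := by
  have h_nonneg := op_nonneg hf.1
  obtain ⟨g, hg, hle⟩ := exists_isAlice_ge h_nonneg (sum_op_le_one hf.1 fun v ↦ (hf.2 v).le)
  refine le_trans ?_ (inn_op_le_val hf hg)
  refine sum_le_sum fun u _ ↦ mul_le_mul_of_nonneg_left (sum_le_sum fun α _ ↦ ?_) (wU_nonneg u)
  rw [sq]
  exact mul_le_mul_of_nonneg_right (hle _) (h_nonneg _)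

end Value

section Symmetrization

variable (G : ProjGame)

/-- The symmetrized game: Alice's question `u` is drawn together with two independent edges, and
Bob's answers to these must project to the same answer for `u`. -/
noncomputable def symmetrization : BinaryCSP G.Q2 G.A (G.Q1 × Edge G.Q2 G.A × Edge G.Q2 G.A) where
  src p := p.2.1.1
  tgt p := p.2.2.1
  weight p := G.μ (p.1, p.2.1) * G.μ (p.1, p.2.2) / G.wU p.1
  payoff p := (constraintMatrix p.2.1.2)ᵀ * constraintMatrix p.2.2.2
  weight_nonneg p := div_nonneg (mul_nonneg (G.μ_nonneg _) (G.μ_nonneg _)) (wU_nonneg _)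
  weight_sum := by
    rw [Fintype.sum_prod_type, ← G.sum_wU]
    refine sum_congr rfl fun u _ ↦ ?_
    rw [Fintype.sum_prod_type]
    simp only [← sum_div, ← mul_sum, ← sum_mul, ← wU_eq_sum_edge, mul_self_div_self]
  payoff_nonneg p β β' := sum_nonneg fun α _ ↦
    mul_nonneg (constraintMatrix_nonneg _ α β) (constraintMatrix_nonneg _ α β')
  payoff_le_one p β β' := by
    refine (sum_le_sum fun α _ ↦ ?_).trans (sum_constraintMatrix_le_one p.2.1.2 β)
    refine mul_le_of_le_one_right (constraintMatrix_nonneg _ α β) ?_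
    exact (single_le_sum (fun α _ ↦ constraintMatrix_nonneg _ α β') (mem_univ α)).trans
      (sum_constraintMatrix_le_one _ β')

variable {G}

lemma symmetrization_score (p : G.Q1 × Edge G.Q2 G.A × Edge G.Q2 G.A) (x y : G.A → ℝ) :
    G.symmetrization.score p x y =
      (constraintMatrix p.2.1.2 *ᵥ x) ⬝ᵥ (constraintMatrix p.2.2.2 *ᵥ y) := by
  simp only [BinaryCSP.score, symmetrization, ← mulVec_mulVec]
  rw [dotProduct_mulVec, vecMul_transpose]

lemma normUsq_op_eq_value (f : G.Q2 × G.A → ℝ) :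
    G.normUsq (G.op f) = G.symmetrization.value fun v β ↦ f (v, β) := by
  have h_sq (w s : ℝ) : w * (s / w) ^ 2 = s * s / w := by
    rcases eq_or_ne w 0 with rfl | hw
    · simp
    · field_simp
  simp only [normUsq, op_apply, BinaryCSP.value, symmetrization_score]
  rw [Fintype.sum_prod_type]
  refine sum_congr rfl fun u _ ↦ ?_
  rw [Fintype.sum_prod_type, mul_sum]
  simp only [h_sq, sum_mul_sum, dotProduct]
  simp only [sum_div, mul_sum]
  rw [sum_comm]
  refine sum_congr rfl fun e _ ↦ ?_
  rw [sum_comm]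
  refine sum_congr rfl fun e' _ ↦ sum_congr rfl fun α _ ↦ ?_
  simp only [symmetrization]
  ring

end Symmetrization

section VectorAssignment

variable {G : ProjGame} {I : Type*} [Fintype I] {h : I → G.Q2 × G.A → ℝ}

/-- The nonnegative vector assignments of the definition of `ProjGame.valPlus`, given through their
coordinates `h i` and indexed by an arbitrary finite type: for each `v`, the nonnegative vectors
`h · (v, β)` have a sum over `β` of Euclidean norm at most `1`. -/
def IsVectorAssignment (h : I → G.Q2 × G.A → ℝ) : Prop :=
  (∀ i, 0 ≤ h i) ∧ ∀ v, ∑ i, (∑ β, h i (v, β)) ^ 2 ≤ 1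

lemma sum_normUsq_op_le (hh : G.IsVectorAssignment h) :
    ∑ i, G.normUsq (G.op (h i)) ≤ 1 - (1 - G.val) ^ 2 / 8 := by
  obtain ⟨b, hb, hle⟩ := G.symmetrization.exists_rounding (h := fun i v β ↦ h i (v, β))
    (fun i v β ↦ hh.1 i (v, β)) hh.2
  have h_val : G.symmetrization.value b ≤ G.val :=
    (normUsq_op_eq_value fun q ↦ b q.1 q.2).symm.trans_le <|
      normUsq_op_le_val ⟨fun q ↦ (hb q.1).1 q.2, fun v ↦ (hb v).2⟩
  have h_loss : (1 - G.val) ^ 2 ≤ (1 - G.symmetrization.value b) ^ 2 :=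
    pow_le_pow_left₀ (sub_nonneg.2 val_le_one) (sub_le_sub_left h_val 1) 2
  simp only [normUsq_op_eq_value]
  linarith

variable (G) in
lemma valPlus_eq_sSup : G.valPlus =
    sSup {x | ∃ n : ℕ, 0 < n ∧ ∃ h : Fin n → G.Q2 × G.A → ℝ, G.IsVectorAssignment h ∧
      x = √(∑ i, G.normUsq (G.op (h i)))} := by
  refine congrArg sSup (Set.ext fun x ↦ exists_congr fun n ↦ and_congr_right fun _ ↦ ?_)
  simp only [sum_normUsq, IsVectorAssignment, Real.sqrt_le_one]
  exact ⟨fun ⟨f, hf, hnorm, hx⟩ ↦ ⟨fun i q ↦ f q i, ⟨fun i q ↦ hf q i, hnorm⟩, hx⟩,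
    fun ⟨h, ⟨hh, hnorm⟩, hx⟩ ↦ ⟨fun q i ↦ h i q, fun q i ↦ hh i q, hnorm, hx⟩⟩

lemma valPlus_nonneg : 0 ≤ G.valPlus :=
  Real.sSup_nonneg <| by rintro _ ⟨_, -, _, -, -, rfl⟩; exact Real.sqrt_nonneg _

variable (G) in
theorem valPlus_sq_le : G.valPlus ^ 2 ≤ 1 - (1 - G.val) ^ 2 / 8 := by
  have h_nonneg : 0 ≤ 1 - (1 - G.val) ^ 2 / 8 :=
    (sum_nonneg fun _ _ ↦ normUsq_nonneg).trans <|
      sum_normUsq_op_le (h := fun i : Empty ↦ i.elim) ⟨by simp, by simp⟩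
  refine (Real.le_sqrt valPlus_nonneg h_nonneg).1 ?_
  rw [valPlus_eq_sSup]
  refine Real.sSup_le ?_ (Real.sqrt_nonneg _)
  rintro _ ⟨n, -, h, hh, rfl⟩
  exact Real.sqrt_le_sqrt (sum_normUsq_op_le hh)

variable [Nonempty I]

lemma sqrt_sum_normUsq_op_le_valPlus (hh : G.IsVectorAssignment h) :
    √(∑ i, G.normUsq (G.op (h i))) ≤ G.valPlus := by
  let e := (Fintype.equivFin I).symm
  rw [valPlus_eq_sSup, ← e.sum_comp fun i ↦ G.normUsq (G.op (h i))]
  refine le_csSup ⟨√(1 - (1 - G.val) ^ 2 / 8), ?_⟩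
    ⟨Fintype.card I, Fintype.card_pos, h ∘ e, ⟨fun i ↦ hh.1 (e i), fun v ↦ ?_⟩, rfl⟩
  · rintro _ ⟨n, -, h, hh, rfl⟩
    exact Real.sqrt_le_sqrt (sum_normUsq_op_le hh)
  · exact (e.sum_comp fun i ↦ (∑ β, h i (v, β)) ^ 2).trans_le (hh.2 v)

lemma sum_normUsq_op_le_valPlus_sq_mul {c : ℝ} (hc : 0 ≤ c) (hh : ∀ i, 0 ≤ h i)
    (hX : ∀ v, ∑ i, (∑ β, h i (v, β)) ^ 2 ≤ c ^ 2) :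
    ∑ i, G.normUsq (G.op (h i)) ≤ (G.valPlus * c) ^ 2 := by
  rcases hc.eq_or_lt' with rfl | hc
  · have h_zero (i : I) : h i = 0 := by
      ext ⟨v, β⟩
      have h_sum : ∑ i, (∑ β, h i (v, β)) ^ 2 = 0 :=
        ((hX v).trans_eq (zero_pow two_ne_zero)).antisymm (sum_nonneg fun i _ ↦ sq_nonneg _)
      have h_sum_i := (sum_eq_zero_iff_of_nonneg fun i _ ↦ sq_nonneg _).1 h_sum i (mem_univ i)
      exact (sum_eq_zero_iff_of_nonneg fun β _ ↦ hh i (v, β)).1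
        (pow_eq_zero_iff two_ne_zero |>.1 h_sum_i) β (mem_univ β)
    have h_op : G.op 0 = 0 := map_zero G.opLinearMap
    simp [h_zero, h_op, normUsq]
  · have h_scaled : G.IsVectorAssignment fun i ↦ c⁻¹ • h i := by
      refine ⟨fun i ↦ smul_nonneg (inv_nonneg.2 hc.le) (hh i), fun v ↦ ?_⟩
      simp only [Pi.smul_apply, smul_eq_mul, ← mul_sum, mul_pow]
      rw [inv_pow, inv_mul_le_one₀ (by positivity)]
      exact hX v
    have h_le := (Real.sqrt_le_left valPlus_nonneg).1 (sqrt_sum_normUsq_op_le_valPlus h_scaled)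
    simp only [op_smul, normUsq_smul, ← mul_sum] at h_le
    rwa [inv_pow, inv_mul_le_iff₀ (by positivity), mul_comm, ← mul_pow] at h_le

variable (G) in
lemma collVal_le_valPlus : G.collVal ≤ G.valPlus := by
  refine Real.sSup_le ?_ valPlus_nonneg
  rintro _ ⟨f, hf, rfl⟩
  simpa using sqrt_sum_normUsq_op_le_valPlus (G := G) (h := fun _ : Unit ↦ f)
    ⟨fun _ ↦ hf.1, fun v ↦ by simp [hf.2 v]⟩

end VectorAssignment

section Tensor

variable {G H : ProjGame}

lemma tensorC_eq_some_iff {A A' : Type} {π : A → Option A} {π' : A' → Option A'} {b : A × A'}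
    {a : A} {a' : A'} : tensorC π π' b = some (a, a') ↔ π b.1 = some a ∧ π' b.2 = some a' := by
  cases h : π b.1 <;> cases h' : π' b.2 <;> simp [tensorC, h, h']

lemma constraintMatrix_tensorC {A A' : Type} [DecidableEq A] [DecidableEq A']
    (π : A → Option A) (π' : A' → Option A') (α β : A) (α' β' : A') :
    constraintMatrix (tensorC π π') (α, α') (β, β') =
      constraintMatrix π α β * constraintMatrix π' α' β' := by
  simp only [constraintMatrix, of_apply, tensorC_eq_some_iff, ite_and]
  split_ifs <;> simp

/-- The product of two edges. -/
def Edge.prod {V V' A A' : Type} (d : Edge V A) (d' : Edge V' A') : Edge (V × V') (A × A') :=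
  ((d.1, d'.1), tensorC d.2 d'.2)

lemma tensor_μ (u : G.Q1) (u' : H.Q1) (e : Edge (G.Q2 × H.Q2) (G.A × H.A)) :
    (G.tensor H).μ ((u, u'), e) = ∑ d : Edge G.Q2 G.A, ∑ d' : Edge H.Q2 H.A,
      if d.prod d' = e then G.μ (u, d) * H.μ (u', d') else 0 := by
  simp only [tensor, Prod.mk.injEq, ite_and]
  rw [Fintype.sum_prod_type, Fintype.sum_prod_type]
  simp only [Fintype.sum_prod_type (α₁ := H.Q1), sum_ite_irrel, sum_const_zero, sum_ite_eq',
    mem_univ, if_true]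
  rfl

lemma sum_tensor_μ_mul (u : G.Q1) (u' : H.Q1)
    (Φ : Edge (G.Q2 × H.Q2) (G.A × H.A) → ℝ) :
    ∑ e : Edge (G.Q2 × H.Q2) (G.A × H.A), (G.tensor H).μ ((u, u'), e) * Φ e =
      ∑ d : Edge G.Q2 G.A, ∑ d' : Edge H.Q2 H.A, G.μ (u, d) * H.μ (u', d') * Φ (d.prod d') := by
  have h_term (e : Edge (G.Q2 × H.Q2) (G.A × H.A)) : (G.tensor H).μ ((u, u'), e) * Φ e =
      ∑ d : Edge G.Q2 G.A, ∑ d' : Edge H.Q2 H.A,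
        if d.prod d' = e then G.μ (u, d) * H.μ (u', d') * Φ e else 0 :=
    (congrArg (· * Φ e) (tensor_μ u u' e)).trans <| by simp only [sum_mul, ite_mul, zero_mul]
  refine (sum_congr rfl fun e _ ↦ h_term e).trans ?_
  rw [sum_comm]
  refine sum_congr rfl fun d _ ↦ ?_
  rw [sum_comm]
  exact sum_congr rfl fun d' _ ↦ by simp

lemma tensor_wU (u : G.Q1) (u' : H.Q1) : (G.tensor H).wU (u, u') = G.wU u * H.wU u' := by
  have h_sum := sum_tensor_μ_mul u u' (fun _ ↦ 1)
  simp only [mul_one] at h_sum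
  rw [wU_eq_sum_edge, wU_eq_sum_edge, sum_mul_sum, ← h_sum]
  exact wU_eq_sum_edge (G := G.tensor H) (u, u')

lemma constraintMatrix_tensorC_mulVec {A A' : Type} [Fintype A] [Fintype A'] [DecidableEq A]
    [DecidableEq A'] (π : A → Option A) (π' : A' → Option A') (x : A × A' → ℝ) (α : A) (α' : A') :
    (constraintMatrix (tensorC π π') *ᵥ x) (α, α') =
      (constraintMatrix π *ᵥ fun β ↦ (constraintMatrix π' *ᵥ fun β' ↦ x (β, β')) α') α := by
  simp only [mulVec, dotProduct, Fintype.sum_prod_type, constraintMatrix_tensorC, mul_sum,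
    mul_assoc]

/-- The operator of `H` applied to the second coordinates of a function of pairs of questions and
pairs of answers, evaluated at `i`. -/
noncomputable def opRight (G H : ProjGame) (F : (G.Q2 × H.Q2) × (G.A × H.A) → ℝ) (i : H.Q1 × H.A) :
    G.Q2 × G.A → ℝ :=
  fun q ↦ H.op (fun q' ↦ F ((q.1, q'.1), (q.2, q'.2))) i

variable {F : (G.Q2 × H.Q2) × (G.A × H.A) → ℝ}

lemma opRight_nonneg (hF : 0 ≤ F) (i : H.Q1 × H.A) : 0 ≤ G.opRight H F i :=
  fun _ ↦ op_nonneg (fun _ ↦ hF _) i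

lemma tensor_op (u : G.Q1) (u' : H.Q1) (α : G.A) (α' : H.A) :
    (G.tensor H).op F ((u, u'), (α, α')) = G.op (G.opRight H F (u', α')) (u, α) := by
  refine (op_apply (G := G.tensor H) F (u, u') (α, α')).trans ?_
  have h_sum := sum_tensor_μ_mul u u' fun e ↦
    (constraintMatrix e.2 *ᵥ fun β ↦ F (e.1, β)) (α, α')
  refine (congrArg₂ (· / ·) h_sum (tensor_wU u u')).trans ?_
  simp only [Edge.prod, constraintMatrix_tensorC_mulVec, op_apply, opRight]
  rw [mul_comm (G.wU u), ← div_div]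
  congr 1
  simp only [mulVec, dotProduct, mul_sum, sum_div]
  refine sum_congr rfl fun d _ ↦ ?_
  rw [sum_comm]
  refine sum_congr rfl fun β _ ↦ sum_congr rfl fun d' _ ↦ sum_congr rfl fun β' _ ↦ ?_
  ring

lemma normUsq_tensor_op :
    (G.tensor H).normUsq ((G.tensor H).op F) =
      ∑ i, H.wU i.1 * G.normUsq (G.op (G.opRight H F i)) := by
  have h_term (q : (G.Q1 × H.Q1) × (G.A × H.A)) :
      (G.tensor H).wU q.1 * (G.tensor H).op F q ^ 2 =
        G.wU q.1.1 * H.wU q.1.2 * G.op (G.opRight H F (q.1.2, q.2.2)) (q.1.1, q.2.1) ^ 2 :=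
    congrArg₂ (· * · ^ 2) (tensor_wU _ _) (tensor_op _ _ _ _)
  refine (normUsq_eq_sum_prod (G := G.tensor H)).trans <|
    (sum_congr rfl fun q _ ↦ h_term q).trans ?_
  simp only [normUsq_eq_sum_prod, mul_sum]
  rw [sum_comm, ← Fintype.sum_prod_type']
  exact Fintype.sum_equiv (Equiv.prodProdProdComm _ _ _ _) _ _ fun q ↦ by
    simp only [Equiv.prodProdProdComm_apply]
    ring

lemma sum_opRight (v : G.Q2) (i : H.Q1 × H.A) :
    ∑ β, G.opRight H F i (v, β) = H.op (fun q' ↦ ∑ β, F ((v, q'.1), (β, q'.2))) i := by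
  have h_op := congrFun (op_sum univ fun β q' ↦ F ((v, q'.1), (β, q'.2))) i
  simpa only [Finset.sum_apply, sum_fn, opRight] using h_op.symm

lemma sum_wU_mul_sum_opRight_sq_le (hF : (G.tensor H).IsBob F) (v : G.Q2) :
    ∑ i, H.wU i.1 * (∑ β, G.opRight H F i (v, β)) ^ 2 ≤ H.collVal ^ 2 := by
  simp only [sum_opRight, ← normUsq_eq_sum_prod]
  refine normUsq_op_le_collVal_sq ⟨fun q' ↦ sum_nonneg fun β _ ↦ hF.1 _, fun v' ↦ ?_⟩
  rw [sum_comm, ← Fintype.sum_prod_type']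
  exact hF.2 (v, v')

variable (G H) in
theorem collVal_tensor_le : (G.tensor H).collVal ≤ G.valPlus * H.collVal := by
  have h_nonneg : 0 ≤ G.valPlus * H.collVal := mul_nonneg valPlus_nonneg collVal_nonneg
  refine Real.sSup_le ?_ h_nonneg
  rintro _ ⟨F, hF, rfl⟩
  refine (Real.sqrt_le_left h_nonneg).2 (normUsq_tensor_op.trans_le ?_)
  have h_wU (i : H.Q1 × H.A) : √(H.wU i.1) ^ 2 = H.wU i.1 := Real.sq_sqrt (wU_nonneg i.1)
  have h_le := sum_normUsq_op_le_valPlus_sq_mul (h := fun i ↦ √(H.wU i.1) • G.opRight H F i)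
    (collVal_nonneg (G := H))
    (fun i ↦ smul_nonneg (Real.sqrt_nonneg _) (opRight_nonneg hF.1 i))
    fun v ↦ by
      simpa only [Pi.smul_apply, smul_eq_mul, ← mul_sum, mul_pow, h_wU]
        using sum_wU_mul_sum_opRight_sq_le hF v
  simpa only [op_smul, normUsq_smul, h_wU] using h_le

variable (G) in
theorem collVal_iterTensor_le (n : ℕ) : (G.iterTensor n).collVal ≤ G.valPlus ^ (n + 1) := by
  induction n with
  | zero => simpa [iterTensor] using G.collVal_le_valPlus
  | succ n ih =>
    rw [pow_succ']
    exact (collVal_tensor_le _ _).trans (mul_le_mul_of_nonneg_left ih valPlus_nonneg)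

end Tensor

end ProjGame

/-- **Parallel repetition for high-value games.** For any projection game `G` with
`val(G) ≤ 1 - ε`, `val(G^{⊗k}) ≤ (1 - ε²/16)^k`. -/
theorem parallel_repetition_high_value (G : ProjGame) (ε : ℝ) (hε0 : 0 ≤ ε) (hε1 : ε ≤ 1)
    (hval : G.val ≤ 1 - ε) (k : ℕ) (hk : 0 < k) :
    (G.iterTensor (k - 1)).val ≤ (1 - ε ^ 2 / 16) ^ k := by
  have h_loss : ε ^ 2 ≤ (1 - G.val) ^ 2 := pow_le_pow_left₀ hε0 (by linarith) 2
  have h_sq : G.valPlus ^ 2 ≤ (1 - ε ^ 2 / 16) ^ 2 := by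
    linarith [G.valPlus_sq_le, sq_nonneg (ε ^ 2 / 16)]
  have h_base : 0 ≤ 1 - ε ^ 2 / 16 := by linarith [pow_le_one₀ (n := 2) hε0 hε1]
  calc (G.iterTensor (k - 1)).val
      ≤ (G.iterTensor (k - 1)).collVal := ProjGame.val_le_collVal _
    _ ≤ G.valPlus ^ (k - 1 + 1) := G.collVal_iterTensor_le (k - 1)
    _ = G.valPlus ^ k := by rw [Nat.sub_add_cancel hk]
    _ ≤ (1 - ε ^ 2 / 16) ^ k :=
      pow_le_pow_left₀ ProjGame.valPlus_nonneg (abs_le_of_sq_le_sq' h_sq h_base).2 k
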